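/- arXiv:1206.1349 — 2 statements merged into one kernel-verified Lean document; each statement's English description precedes it below -/
import Mathlib

section
/- Let Ω ⊂ ℝ^N be a smooth bounded domain, p : Ω → [2, ∞) continuous with p_+ < ∞, u ∈ C^{1,α}(cl Ω) with gradient Du, and set ρ(x) = |Du(x)|^{p(x)−2}. Fix exponents: t̄ > 0, and γ with N − 2t̄ < γ < N − 2 (N ≥ 3). Assume the weight bound sup_{y} ∫_Ω ρ(x)^{−t̄} |x − y|^{−γ} dx ≤ C₀ < ∞. Then there is a constant C such that for every w ∈ C_c^1(Ω), ‖w‖_{L^{2*(t̄)}(Ω)} ≤ C ( ∫_Ω ρ |Dw|² dx )^{1/2}, where 1/2*(t̄) = 1/2 − 1/N + (1/t̄)(1/2 − γ/(2N)). -/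
open MeasureTheory

open Set Metric in
lemma ws_polar {N : ℕ} (hN : 0 < N) (g : EuclideanSpace ℝ (Fin N) → ENNReal) (hg : Measurable g) :
    ∫⁻ z, g z = ∫⁻ θ, (∫⁻ r in Ioi (0:ℝ), ENNReal.ofReal (r ^ (N-1)) * g (r • (θ : EuclideanSpace ℝ (Fin N))))
      ∂((volume : Measure (EuclideanSpace ℝ (Fin N))).toSphere) := by
  have : Nonempty (Fin N) := ⟨⟨0, hN⟩⟩
  set μ : Measure (EuclideanSpace ℝ (Fin N)) := volume
  have h0 : MeasurableSet ({0}ᶜ : Set (EuclideanSpace ℝ (Fin N))) := (measurableSet_singleton 0).compl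
  have hmp := μ.measurePreserving_homeomorphUnitSphereProd
  have hG : Measurable (fun x : sphere (0 : EuclideanSpace ℝ (Fin N)) 1 × Ioi (0:ℝ) => g ((x.2 : ℝ) • (x.1 : EuclideanSpace ℝ (Fin N)))) := by
    apply hg.comp
    fun_prop
  calc ∫⁻ z, g z ∂μ = ∫⁻ z in ({0}ᶜ : Set (EuclideanSpace ℝ (Fin N))), g z ∂μ := by
        rw [setLIntegral_congr (t := univ) (by
          rw [ae_eq_univ]; simp [μ]), setLIntegral_univ]
    _ = ∫⁻ z : ({0}ᶜ : Set (EuclideanSpace ℝ (Fin N))), g z ∂(μ.comap (↑)) := by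
        rw [lintegral_subtype_comap h0]
    _ = ∫⁻ x, g ((x.2 : ℝ) • (x.1 : EuclideanSpace ℝ (Fin N))) ∂μ.toSphere.prod (.volumeIoiPow (Module.finrank ℝ (EuclideanSpace ℝ (Fin N)) - 1)) := by
        rw [← hmp.lintegral_comp hG]
        refine lintegral_congr fun z => ?_
        congr 1
        have := (homeomorphUnitSphereProd (EuclideanSpace ℝ (Fin N))).symm_apply_apply z
        conv_lhs => rw [← this]
        simp only [homeomorphUnitSphereProd_symm_apply_coe]
    _ = _ := by
        rw [lintegral_prod _ hG.aemeasurable]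
        refine lintegral_congr fun θ => ?_
        rw [Measure.volumeIoiPow, lintegral_withDensity_eq_lintegral_mul _ (by fun_prop) (by
          apply hg.comp; fun_prop)]
        simp only [finrank_euclideanSpace, Fintype.card_fin, Pi.mul_apply]
        rw [lintegral_subtype_comap measurableSet_Ioi (fun r : ℝ => ENNReal.ofReal (r ^ (N-1)) * g (r • (θ : EuclideanSpace ℝ (Fin N))))]

open Set Metric in
lemma ws_radial {N : ℕ} (hN : 0 < N) (θ : sphere (0 : EuclideanSpace ℝ (Fin N)) 1) {r : ℝ} (hr : 0 < r)
    (l : ℝ) : ENNReal.ofReal (r ^ (N-1)) * ‖r • (θ : EuclideanSpace ℝ (Fin N))‖ₑ ^ (-l)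
      = ENNReal.ofReal (r ^ ((N:ℝ) - 1 - l)) := by
  have hθ : ‖(θ : EuclideanSpace ℝ (Fin N))‖ = 1 := by simp
  have : ‖r • (θ : EuclideanSpace ℝ (Fin N))‖ₑ = ENNReal.ofReal r := by
    rw [← ofReal_norm, norm_smul, hθ, mul_one, Real.norm_of_nonneg hr.le]
  rw [this, ENNReal.ofReal_rpow_of_pos hr, ← ENNReal.ofReal_mul (by positivity), ← Real.rpow_natCast,
    ← Real.rpow_add hr, Nat.cast_pred hN]
  congr 2

open Set Metric in
lemma ws_kernel_in {N : ℕ} (hN : 0 < N) (l : ℝ) (hl : l < N) :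
    ∃ c : ENNReal, c ≠ ⊤ ∧ ∀ R : ℝ, 0 < R → ∀ x : EuclideanSpace ℝ (Fin N),
      ∫⁻ y in {y | ‖x - y‖ < R}, (‖x - y‖ₑ) ^ (-l) ≤ c * ENNReal.ofReal (R ^ (N - l)) := by
  refine ⟨(volume : Measure (EuclideanSpace ℝ (Fin N))).toSphere univ * ENNReal.ofReal (1 / (N - l)), by finiteness, fun R hR x => ?_⟩
  have hms : MeasurableSet {z : EuclideanSpace ℝ (Fin N) | ‖z‖ < R} := measurableSet_lt (by fun_prop) (by fun_prop)
  have hms' : MeasurableSet {y : EuclideanSpace ℝ (Fin N) | ‖x - y‖ < R} := measurableSet_lt (by fun_prop) (by fun_prop)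
  rw [← lintegral_indicator hms']
  have := lintegral_sub_left_eq_self (μ := (volume : Measure (EuclideanSpace ℝ (Fin N)))) (({z : EuclideanSpace ℝ (Fin N) | ‖z‖ < R}).indicator (fun z => (‖z‖ₑ) ^ (-l))) x
  calc _ = ∫⁻ z, ({z : EuclideanSpace ℝ (Fin N) | ‖z‖ < R}).indicator (fun z => (‖z‖ₑ) ^ (-l)) z := by
        rw [← this]; rfl
    _ = _ := by
      rw [ws_polar hN _ ((by fun_prop : Measurable fun z : EuclideanSpace ℝ (Fin N) => (‖z‖ₑ) ^ (-l)).indicator hms)]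
    _ ≤ ∫⁻ θ, ENNReal.ofReal (1 / (N - l)) * ENNReal.ofReal (R ^ (N - l)) ∂((volume : Measure (EuclideanSpace ℝ (Fin N))).toSphere) := by
      refine lintegral_mono fun θ => ?_
      have hθ : ‖(θ : EuclideanSpace ℝ (Fin N))‖ = 1 := by simp
      have hint : IntervalIntegrable (fun r : ℝ => r ^ ((N:ℝ) - 1 - l)) volume 0 R :=
        intervalIntegral.intervalIntegrable_rpow' (by linarith)
      calc _ = ∫⁻ r in Ioi (0:ℝ), (Ioc (0:ℝ) R).indicator (fun r => ENNReal.ofReal (r ^ ((N:ℝ) - 1 - l))) r := by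
            
            refine lintegral_congr_ae ?_
            have hne : ∀ᵐ r : ℝ ∂(volume.restrict (Ioi (0:ℝ))), r ≠ R := ae_restrict_of_ae (Measure.ae_ne volume R)
            filter_upwards [ae_restrict_mem measurableSet_Ioi, hne] with r hr hrR
            have hr' : (0:ℝ) < r := hr
            have hnr : ‖r • (θ : EuclideanSpace ℝ (Fin N))‖ = r := by
              rw [norm_smul, hθ, mul_one, Real.norm_of_nonneg hr'.le]
            by_cases h : r < R
            · rw [indicator_of_mem (by simpa [hnr] using h), indicator_of_mem (show r ∈ Ioc (0:ℝ) R from ⟨hr', h.le⟩), ws_radial hN θ hr']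
            · rw [indicator_of_notMem (by simpa [hnr] using h), indicator_of_notMem, mul_zero]
              rintro ⟨_, h2⟩
              exact h (lt_of_le_of_ne h2 hrR)
        _ = ENNReal.ofReal (∫ r in (0:ℝ)..R, r ^ ((N:ℝ) - 1 - l)) := by
            rw [intervalIntegral.integral_of_le hR.le, ofReal_integral_eq_lintegral_ofReal hint.1]
            · rw [setLIntegral_indicator measurableSet_Ioc, inter_eq_self_of_subset_left Ioc_subset_Ioi_self]
            · filter_upwards [ae_restrict_mem measurableSet_Ioc] with y hy
              exact Real.rpow_nonneg hy.1.le _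
        _ ≤ _ := by
            rw [← ENNReal.ofReal_mul (by have : 0 < (N:ℝ) - l := by linarith
                                         positivity), integral_rpow (Or.inl (by linarith)), Real.zero_rpow (by linarith)]
            apply le_of_eq
            congr 1
            ring_nf
    _ = _ := by
      rw [lintegral_const]; ring

open Set Metric in
lemma ws_kernel_out {N : ℕ} (hN : 0 < N) (l : ℝ) (hl : N < l) :
    ∃ c : ENNReal, c ≠ ⊤ ∧ ∀ R : ℝ, 0 < R → ∀ x : EuclideanSpace ℝ (Fin N),
      ∫⁻ y in {y | R ≤ ‖x - y‖}, (‖x - y‖ₑ) ^ (-l) ≤ c * ENNReal.ofReal (R ^ (N - l)) := by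
  refine ⟨(volume : Measure (EuclideanSpace ℝ (Fin N))).toSphere univ * ENNReal.ofReal (1 / (l - N)), by finiteness, fun R hR x => ?_⟩
  have hms : MeasurableSet {z : EuclideanSpace ℝ (Fin N) | R ≤ ‖z‖} := measurableSet_le (by fun_prop) (by fun_prop)
  have hms' : MeasurableSet {y : EuclideanSpace ℝ (Fin N) | R ≤ ‖x - y‖} := measurableSet_le (by fun_prop) (by fun_prop)
  rw [← lintegral_indicator hms']
  have := lintegral_sub_left_eq_self (μ := (volume : Measure (EuclideanSpace ℝ (Fin N)))) (({z : EuclideanSpace ℝ (Fin N) | R ≤ ‖z‖}).indicator (fun z => (‖z‖ₑ) ^ (-l))) x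
  calc _ = ∫⁻ z, ({z : EuclideanSpace ℝ (Fin N) | R ≤ ‖z‖}).indicator (fun z => (‖z‖ₑ) ^ (-l)) z := by
        rw [← this]; rfl
    _ = _ := by
      rw [ws_polar hN _ ((by fun_prop : Measurable fun z : EuclideanSpace ℝ (Fin N) => (‖z‖ₑ) ^ (-l)).indicator hms)]
    _ ≤ ∫⁻ θ, ENNReal.ofReal (1 / (l - N)) * ENNReal.ofReal (R ^ (N - l)) ∂((volume : Measure (EuclideanSpace ℝ (Fin N))).toSphere) := by
      refine lintegral_mono fun θ => ?_
      have hθ : ‖(θ : EuclideanSpace ℝ (Fin N))‖ = 1 := by simp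
      have hint : IntegrableOn (fun r : ℝ => r ^ ((N:ℝ) - 1 - l)) (Ioi R) :=
        integrableOn_Ioi_rpow_of_lt (by linarith) hR
      calc _ = ∫⁻ r in Ioi (0:ℝ), (Ioi R).indicator (fun r => ENNReal.ofReal (r ^ ((N:ℝ) - 1 - l))) r := by
            
            refine lintegral_congr_ae ?_
            have hne : ∀ᵐ r : ℝ ∂(volume.restrict (Ioi (0:ℝ))), r ≠ R := ae_restrict_of_ae (Measure.ae_ne volume R)
            filter_upwards [ae_restrict_mem measurableSet_Ioi, hne] with r hr hrR
            have hr' : (0:ℝ) < r := hr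
            have hnr : ‖r • (θ : EuclideanSpace ℝ (Fin N))‖ = r := by
              rw [norm_smul, hθ, mul_one, Real.norm_of_nonneg hr'.le]
            by_cases h : R ≤ r
            · rw [indicator_of_mem (by simpa [hnr] using h), indicator_of_mem (show r ∈ Ioi R from lt_of_le_of_ne h hrR.symm), ws_radial hN θ hr']
            · rw [indicator_of_notMem (by simpa [hnr] using h), indicator_of_notMem, mul_zero]
              intro h2
              exact h (le_of_lt h2)
        _ = ENNReal.ofReal (∫ r in Ioi R, r ^ ((N:ℝ) - 1 - l)) := by
            rw [ofReal_integral_eq_lintegral_ofReal hint]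
            · rw [setLIntegral_indicator measurableSet_Ioi, inter_eq_self_of_subset_left (Ioi_subset_Ioi hR.le)]
            · filter_upwards [ae_restrict_mem measurableSet_Ioi] with y hy
              exact Real.rpow_nonneg (hR.le.trans (le_of_lt hy)) _
        _ ≤ _ := by
            rw [← ENNReal.ofReal_mul (by have : 0 < l - (N:ℝ) := by linarith
                                         positivity), integral_Ioi_rpow_of_lt (by linarith) hR]
            apply le_of_eq
            congr 1
            rw [show (N:ℝ) - 1 - l + 1 = N - l by ring, ← neg_sub (N:ℝ) l]
            rw [one_div, neg_div, inv_neg, neg_mul, div_eq_inv_mul]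
    _ = _ := by
      rw [lintegral_const]; ring

open Set Metric in
lemma ws_potential {N : ℕ} (hN : 0 < N) :
    ∃ K : ENNReal, K ≠ ⊤ ∧ ∀ w : EuclideanSpace ℝ (Fin N) → ℝ, ContDiff ℝ 1 w → HasCompactSupport w →
      ∀ x, ‖w x‖ₑ ≤ K * ∫⁻ y, ‖fderiv ℝ w y‖ₑ * ‖x - y‖ₑ ^ (1 - (N:ℝ)) := by
  have : Nonempty (Fin N) := ⟨⟨0, hN⟩⟩
  set σ := (volume : Measure (EuclideanSpace ℝ (Fin N))).toSphere with hσ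
  have hσ0 : σ univ ≠ 0 := by
    rw [Ne, Measure.measure_univ_eq_zero]
    exact Measure.toSphere_ne_zero _
  refine ⟨(σ univ)⁻¹, by simpa using hσ0, fun w hw hwc x => ?_⟩
  rw [← ENNReal.div_eq_inv_mul, ENNReal.le_div_iff_mul_le (Or.inl hσ0) (Or.inl (by finiteness))]
  have hD : Measurable (fderiv ℝ w) := (hw.continuous_fderiv one_ne_zero).measurable
  calc ‖w x‖ₑ * σ univ = ∫⁻ θ, ‖w x‖ₑ ∂σ := by rw [lintegral_const]
    _ ≤ ∫⁻ θ, (∫⁻ r in Ioi (0:ℝ), ENNReal.ofReal (r ^ (N-1)) * (‖fderiv ℝ w (x - r • (θ : EuclideanSpace ℝ (Fin N)))‖ₑ * ‖r • (θ : EuclideanSpace ℝ (Fin N))‖ₑ ^ (1 - (N:ℝ)))) ∂σ := by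
      refine lintegral_mono fun θ => ?_
      have hθ : ‖(θ : EuclideanSpace ℝ (Fin N))‖ = 1 := by simp
      have h1 : ContDiff ℝ 1 (fun r : ℝ => w (x - r • (θ : EuclideanSpace ℝ (Fin N)))) := by fun_prop
      
      have hiso : Isometry (fun r : ℝ => x - r • (θ : EuclideanSpace ℝ (Fin N))) := by
        refine Isometry.of_dist_eq fun a b => ?_
        rw [dist_sub_left, dist_eq_norm, ← sub_smul, norm_smul, hθ, mul_one, Real.dist_eq, Real.norm_eq_abs]
      have h2 : HasCompactSupport (fun r : ℝ => w (x - r • (θ : EuclideanSpace ℝ (Fin N)))) :=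
        hwc.comp_isClosedEmbedding hiso.isClosedEmbedding
      have h3 := HasCompactSupport.integral_Ioi_deriv_eq h1 h2 0
      simp only [zero_smul, sub_zero] at h3
      rw [← enorm_neg, ← h3]
      refine (enorm_integral_le_lintegral_enorm _).trans ?_
      refine setLIntegral_mono' measurableSet_Ioi fun r hr => ?_
      have hr' : (0:ℝ) < r := hr
      rw [mul_left_comm, show 1 - (N:ℝ) = -((N:ℝ) - 1) by ring, ws_radial hN θ hr']
      simp only [sub_self, Real.rpow_zero, ENNReal.ofReal_one, mul_one]
      have hd : HasDerivAt (fun r : ℝ => w (x - r • (θ : EuclideanSpace ℝ (Fin N))))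
          (fderiv ℝ w (x - r • (θ : EuclideanSpace ℝ (Fin N))) (-((1:ℝ) • (θ : EuclideanSpace ℝ (Fin N))))) r := by
        apply HasFDerivAt.comp_hasDerivAt
        · exact ((hw.differentiable one_ne_zero) _).hasFDerivAt
        · exact ((hasDerivAt_id r).smul_const _).const_sub x
      rw [hd.deriv]
      refine (ContinuousLinearMap.le_opENorm _ _).trans ?_
      rw [one_smul, enorm_neg, ← ofReal_norm (θ : EuclideanSpace ℝ (Fin N)), hθ, ENNReal.ofReal_one, mul_one]
    _ = ∫⁻ z, ‖fderiv ℝ w (x - z)‖ₑ * ‖z‖ₑ ^ (1 - (N:ℝ)) := by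
      rw [ws_polar hN _ (by fun_prop)]
    _ = _ := by
      rw [← lintegral_sub_left_eq_self (μ := (volume : Measure (EuclideanSpace ℝ (Fin N)))) _ x]
      simp

lemma ws_key {N : ℕ} (hN : 0 < N) (r l : ℝ) (hr : 1 < r) (hl : l < N) (hl2 : N * (1 - 1 / r) < l) :
    ∃ c : ENNReal, c ≠ ⊤ ∧ ∀ h : EuclideanSpace ℝ (Fin N) → ENNReal, Measurable h →
      ∫⁻ y, h y ^ r ≤ 1 → ∀ T : ℝ, 0 < T → ∀ x,
      ∫⁻ y in {y | h y ≤ ENNReal.ofReal T}, h y * ‖x - y‖ₑ ^ (-l)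
        ≤ c * ENNReal.ofReal (T ^ (1 - r * (1 - l / N))) := by
  have hNr : (0:ℝ) < N := by exact_mod_cast hN
  have hconj : r.HolderConjugate (Real.conjExponent r) := Real.HolderConjugate.conjExponent hr
  set r' := Real.conjExponent r with hr'
  have hr'pos : 0 < r' := hconj.symm.pos
  have hinv : 1 - 1 / r = 1 / r' := by
    have := hconj.inv_add_inv_eq_one
    rw [one_div, one_div]; linarith
  have hl3 : (N:ℝ) < l * r' := by
    rw [hinv, mul_one_div, div_lt_iff₀ hr'pos] at hl2
    exact hl2
  obtain ⟨c1, hc1, H1⟩ := ws_kernel_in hN l hl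
  obtain ⟨c2, hc2, H2⟩ := ws_kernel_out hN (l * r') hl3
  refine ⟨c1 + c2 ^ (1 / r'), ?_, fun h hh hint T hT x => ?_⟩
  · have : 0 ≤ 1 / r' := by positivity
    finiteness
  set R : ℝ := T ^ (-(r / N)) with hR
  have hRpos : 0 < R := by positivity
  have hms : MeasurableSet {y : EuclideanSpace ℝ (Fin N) | ‖x - y‖ < R} :=
    measurableSet_lt (by fun_prop) (by fun_prop)
  have hms2 : MeasurableSet {y : EuclideanSpace ℝ (Fin N) | h y ≤ ENNReal.ofReal T} :=
    measurableSet_le (by fun_prop) (by fun_prop)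
  have hk : Measurable (fun y : EuclideanSpace ℝ (Fin N) => ‖x - y‖ₑ ^ (-l)) := by fun_prop
  rw [← lintegral_add_compl _ hms, add_mul]
  refine add_le_add ?_ ?_
  · calc _ ≤ ∫⁻ y in {y | ‖x - y‖ < R}, ENNReal.ofReal T * ‖x - y‖ₑ ^ (-l) := by
          rw [Measure.restrict_restrict hms]
          calc _ ≤ ∫⁻ y in {y | ‖x - y‖ < R} ∩ {y | h y ≤ ENNReal.ofReal T}, ENNReal.ofReal T * ‖x - y‖ₑ ^ (-l) := by
                refine setLIntegral_mono' (hms.inter hms2) fun y hy => ?_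
                gcongr
                exact hy.2
            _ ≤ _ := lintegral_mono_set Set.inter_subset_left
      _ = ENNReal.ofReal T * ∫⁻ y in {y | ‖x - y‖ < R}, ‖x - y‖ₑ ^ (-l) := by
          rw [lintegral_const_mul _ hk]
      _ ≤ ENNReal.ofReal T * (c1 * ENNReal.ofReal (R ^ (N - l))) := by
          gcongr
          exact H1 R hRpos x
      _ = c1 * ENNReal.ofReal (T * R ^ (N - l)) := by
          rw [ENNReal.ofReal_mul hT.le]; ring
      _ = _ := by
          congr 2
          rw [hR, ← Real.rpow_mul hT.le]
          nth_rewrite 1 [← Real.rpow_one T]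
          rw [← Real.rpow_add hT]
          congr 1
          field_simp
          ring
  · have hcompl : {y : EuclideanSpace ℝ (Fin N) | ‖x - y‖ < R}ᶜ = {y | R ≤ ‖x - y‖} := by
      ext y; simp
    rw [hcompl]
    calc _ ≤ ∫⁻ y in {y | R ≤ ‖x - y‖}, h y * ‖x - y‖ₑ ^ (-l) := by
          rw [Measure.restrict_restrict (hcompl ▸ hms.compl)]
          exact lintegral_mono_set Set.inter_subset_left
      _ ≤ (∫⁻ y in {y | R ≤ ‖x - y‖}, h y ^ r) ^ (1 / r) *
            (∫⁻ y in {y | R ≤ ‖x - y‖}, (‖x - y‖ₑ ^ (-l)) ^ r') ^ (1 / r') :=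
          ENNReal.lintegral_mul_le_Lp_mul_Lq _ hconj hh.aemeasurable hk.aemeasurable
      _ ≤ 1 ^ (1 / r) * (c2 * ENNReal.ofReal (R ^ (N - l * r'))) ^ (1 / r') := by
          have h1 : 0 ≤ 1 / r := by positivity
          have h2 : 0 ≤ 1 / r' := by positivity
          gcongr
          · exact (setLIntegral_le_lintegral _ _).trans hint
          · simp_rw [← ENNReal.rpow_mul, neg_mul]
            exact H2 R hRpos x
      _ = _ := by
          have h2 : 0 ≤ 1 / r' := by positivity
          rw [ENNReal.one_rpow, one_mul, ENNReal.mul_rpow_of_nonneg _ _ h2,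
            ENNReal.ofReal_rpow_of_pos (by positivity), hR, ← Real.rpow_mul hT.le, ← Real.rpow_mul hT.le]
          congr 3
          have : (N - l * r') * (1 / r') = N * (1 - 1 / r) - l := by
            rw [hinv]; field_simp
          rw [mul_assoc, this]
          field_simp
          ring

lemma ws_half {N : ℕ} (hN : 0 < N) (a r l : ℝ) (ha : 1 < a) (hr : 1 < r) (hl : l < N)
    (hl2 : N * (1 - 1 / r) < l) (hsum : 1 / a + 1 / r + l / N = 2) :
    ∃ c : ENNReal, c ≠ ⊤ ∧ ∀ φ h : EuclideanSpace ℝ (Fin N) → ENNReal, Measurable φ → Measurable h →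
      (∀ x, φ x ≠ ⊤) → ∫⁻ y, φ y ^ a ≤ 1 → ∫⁻ y, h y ^ r ≤ 1 →
      ∫⁻ y, φ y * ∫⁻ x in {x | h x ≤ φ y ^ (a / r)}, h x * ‖x - y‖ₑ ^ (-l) ≤ c := by
  obtain ⟨c, hc, H⟩ := ws_key hN r l hr hl hl2
  have hNr : (0:ℝ) < N := by exact_mod_cast hN
  refine ⟨c, hc, fun φ h hφ hh hφt hφi hhi => ?_⟩
  calc _ ≤ ∫⁻ y, c * φ y ^ a := by
        refine lintegral_mono fun y => ?_
        by_cases h0 : φ y = 0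
        · simp [h0]
        have hT : 0 < (φ y).toReal := ENNReal.toReal_pos h0 (hφt y)
        have hTT : φ y = ENNReal.ofReal (φ y).toReal := (ENNReal.ofReal_toReal (hφt y)).symm
        set T := (φ y).toReal
        have h1 := H h hh hhi (T ^ (a / r)) (by positivity) y
        have : ∀ x, ‖x - y‖ₑ = ‖y - x‖ₑ := fun x => enorm_sub_rev x y
        simp_rw [this]
        rw [← ENNReal.ofReal_rpow_of_pos hT, ← hTT] at h1
        refine (mul_le_mul_right h1 _).trans ?_
        rw [hTT, ENNReal.ofReal_rpow_of_pos hT, mul_left_comm, ← ENNReal.ofReal_mul hT.le]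
        gcongr
        apply le_of_eq
        rw [← Real.rpow_mul hT.le]
        nth_rewrite 1 [← Real.rpow_one T]
        rw [← Real.rpow_add hT]
        congr 1
        have : l / N = 2 - 1 / a - 1 / r := by linarith
        rw [this]
        field_simp
        ring
    _ = c * ∫⁻ y, φ y ^ a := by rw [lintegral_const_mul _ (by fun_prop)]
    _ ≤ c * 1 := by gcongr
    _ = c := mul_one c

lemma ws_HLS_normalized {N : ℕ} (hN : 0 < N) (a r l : ℝ) (ha : 1 < a) (hr : 1 < r) (hl : l < N)
    (hsum : 1 / a + 1 / r + l / N = 2) :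
    ∃ c : ENNReal, c ≠ ⊤ ∧ ∀ φ h : EuclideanSpace ℝ (Fin N) → ENNReal, Measurable φ → Measurable h →
      (∀ x, φ x ≠ ⊤) → (∀ x, h x ≠ ⊤) → ∫⁻ y, φ y ^ a ≤ 1 → ∫⁻ y, h y ^ r ≤ 1 →
      ∫⁻ x, h x * ∫⁻ y, φ y * ‖x - y‖ₑ ^ (-l) ≤ c := by
  have hNr : (0:ℝ) < N := by exact_mod_cast hN
  have ha1 : 1 / a < 1 := by rw [div_lt_one (by linarith)]; exact ha
  have hr1 : 1 / r < 1 := by rw [div_lt_one (by linarith)]; exact hr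
  have hl' : l = N * (2 - 1 / a - 1 / r) := by
    have : l / N = 2 - 1 / a - 1 / r := by linarith
    rw [← this]; field_simp
  obtain ⟨c1, hc1, H1⟩ := ws_half hN a r l ha hr hl (by rw [hl']; exact mul_lt_mul_of_pos_left (by linarith) hNr) hsum
  obtain ⟨c2, hc2, H2⟩ := ws_half hN r a l hr ha hl (by rw [hl']; exact mul_lt_mul_of_pos_left (by linarith) hNr) (by linarith)
  refine ⟨c1 + c2, by finiteness, fun φ h hφ hh hφt hht hφi hhi => ?_⟩
  have ha0 : 0 < a := by linarith
  have hr0 : 0 < r := by linarith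
  have hmk : Measurable (fun z : EuclideanSpace ℝ (Fin N) × EuclideanSpace ℝ (Fin N) =>
      h z.1 * (φ z.2 * ‖z.1 - z.2‖ₑ ^ (-l))) := by fun_prop
  have hmA : MeasurableSet {z : EuclideanSpace ℝ (Fin N) × EuclideanSpace ℝ (Fin N) |
      h z.1 ≤ φ z.2 ^ (a / r)} := measurableSet_le (by fun_prop) (by fun_prop)
  have hmB : MeasurableSet {z : EuclideanSpace ℝ (Fin N) × EuclideanSpace ℝ (Fin N) |
      φ z.2 ≤ h z.1 ^ (r / a)} := measurableSet_le (by fun_prop) (by fun_prop)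
  have hAm := hmk.indicator hmA
  have hBm := hmk.indicator hmB
  set A := {z : EuclideanSpace ℝ (Fin N) × EuclideanSpace ℝ (Fin N) | h z.1 ≤ φ z.2 ^ (a / r)} with hA
  set B := {z : EuclideanSpace ℝ (Fin N) × EuclideanSpace ℝ (Fin N) | φ z.2 ≤ h z.1 ^ (r / a)} with hB
  set G := (fun z : EuclideanSpace ℝ (Fin N) × EuclideanSpace ℝ (Fin N) =>
      h z.1 * (φ z.2 * ‖z.1 - z.2‖ₑ ^ (-l))) with hG
  calc _ = ∫⁻ x, ∫⁻ y, G (x, y) := by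
        refine lintegral_congr fun x => ?_
        rw [← lintegral_const_mul _ (by fun_prop)]
    _ = ∫⁻ z, G z ∂(volume.prod volume) := by
        rw [lintegral_prod _ hmk.aemeasurable]
    _ ≤ ∫⁻ z, A.indicator G z + B.indicator G z ∂(volume.prod volume) := by
        refine lintegral_mono fun z => ?_
        by_cases hz : z ∈ A
        · rw [Set.indicator_of_mem hz]; exact le_self_add
        · have hzB : z ∈ B := by
            have h1 : φ z.2 ^ (a / r) < h z.1 := not_le.mp hz
            have h2 : (φ z.2 ^ (a / r)) ^ (r / a) ≤ h z.1 ^ (r / a) :=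
              ENNReal.rpow_le_rpow h1.le (by positivity)
            rw [← ENNReal.rpow_mul, show a / r * (r / a) = 1 by field_simp, ENNReal.rpow_one] at h2
            exact h2
          rw [Set.indicator_of_mem hzB]; exact le_add_self
    _ = ∫⁻ z, A.indicator G z ∂(volume.prod volume) + ∫⁻ z, B.indicator G z ∂(volume.prod volume) := by
        rw [lintegral_add_left hAm]
    _ ≤ c1 + c2 := by
        refine add_le_add ?_ ?_
        · rw [lintegral_prod_symm _ hAm.aemeasurable]
          refine le_trans (le_of_eq ?_) (H1 φ h hφ hh hφt hφi hhi)
          refine lintegral_congr fun y => ?_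
          rw [← lintegral_const_mul _ (by fun_prop), ← lintegral_indicator (measurableSet_le (by fun_prop) (by fun_prop))]
          refine lintegral_congr fun x => ?_
          simp only [Set.indicator, hA, hG, Set.mem_ofPred_eq]
          split_ifs
          · ring
          · rfl
        · rw [lintegral_prod _ hBm.aemeasurable]
          refine le_trans (le_of_eq ?_) (H2 h φ hh hφ hht hhi hφi)
          refine lintegral_congr fun x => ?_
          rw [← lintegral_const_mul _ (by fun_prop), ← lintegral_indicator (measurableSet_le (by fun_prop) (by fun_prop))]
          refine lintegral_congr fun y => ?_
          simp only [Set.indicator, hB, hG, Set.mem_ofPred_eq, enorm_sub_rev x y]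

lemma ws_HLS {N : ℕ} (hN : 0 < N) (a r l : ℝ) (ha : 1 < a) (hr : 1 < r) (hl : l < N)
    (hsum : 1 / a + 1 / r + l / N = 2) :
    ∃ c : ENNReal, c ≠ ⊤ ∧ ∀ φ h : EuclideanSpace ℝ (Fin N) → ENNReal, Measurable φ → Measurable h →
      (∀ x, φ x ≠ ⊤) → (∀ x, h x ≠ ⊤) → ∫⁻ y, φ y ^ a ≠ ⊤ → ∫⁻ y, h y ^ r ≠ ⊤ →
      ∫⁻ x, h x * ∫⁻ y, φ y * ‖x - y‖ₑ ^ (-l) ≤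
        c * ((∫⁻ y, φ y ^ a) ^ (1 / a) * (∫⁻ y, h y ^ r) ^ (1 / r)) := by
  obtain ⟨c, hc, H⟩ := ws_HLS_normalized hN a r l ha hr hl hsum
  refine ⟨c, hc, fun φ h hφ hh hφt hht hφi hhi => ?_⟩
  have ha0 : 0 < a := by linarith
  have hr0 : 0 < r := by linarith
  have norm : ∀ (f : EuclideanSpace ℝ (Fin N) → ENNReal) (b : ℝ), 0 < b → Measurable f →
      ∫⁻ y, f y ^ b ≠ 0 → ∫⁻ y, f y ^ b ≠ ⊤ →
      ∫⁻ y, (((∫⁻ y, f y ^ b) ^ (1 / b))⁻¹ * f y) ^ b ≤ 1 := by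
    intro f b hb hf h0 ht
    simp_rw [ENNReal.mul_rpow_of_nonneg _ _ hb.le]
    rw [lintegral_const_mul _ (by fun_prop), ← ENNReal.inv_rpow, ← ENNReal.rpow_mul,
      one_div_mul_cancel hb.ne', ENNReal.rpow_one, ENNReal.inv_mul_cancel h0 ht]
  by_cases h0 : ∫⁻ y, φ y ^ a = 0
  · have hz : φ =ᵐ[volume] 0 := by
      rw [lintegral_eq_zero_iff (by fun_prop)] at h0
      filter_upwards [h0] with y hy
      simpa [ENNReal.rpow_eq_zero_iff, ha0, ha0.not_gt] using hy
    have : ∀ x, ∫⁻ y, φ y * ‖x - y‖ₑ ^ (-l) = 0 := by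
      intro x
      rw [lintegral_eq_zero_iff (by fun_prop)]
      filter_upwards [hz] with y hy
      simp [hy]
    simp [this]
  by_cases h0' : ∫⁻ y, h y ^ r = 0
  · have hz : h =ᵐ[volume] 0 := by
      rw [lintegral_eq_zero_iff (by fun_prop)] at h0'
      filter_upwards [h0'] with y hy
      simpa [ENNReal.rpow_eq_zero_iff, hr0, hr0.not_gt] using hy
    have : ∫⁻ x, h x * ∫⁻ y, φ y * ‖x - y‖ₑ ^ (-l) = ∫⁻ x : EuclideanSpace ℝ (Fin N), 0 := by
      refine lintegral_congr_ae ?_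
      filter_upwards [hz] with y hy
      simp [hy]
    simp [this]
  have n1 := norm φ a ha0 hφ h0 hφi
  have n2 := norm h r hr0 hh h0' hhi
  set P := (∫⁻ y, φ y ^ a) ^ (1 / a) with hP
  set Q := (∫⁻ y, h y ^ r) ^ (1 / r) with hQ
  have hP0 : P ≠ 0 := by
    rw [hP, Ne, ENNReal.rpow_eq_zero_iff]; push Not
    exact ⟨fun h => absurd h h0, fun h => absurd h hφi⟩
  have hQ0 : Q ≠ 0 := by
    rw [hQ, Ne, ENNReal.rpow_eq_zero_iff]; push Not
    exact ⟨fun h => absurd h h0', fun h => absurd h hhi⟩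
  have hPt : P ≠ ⊤ := ENNReal.rpow_ne_top_of_nonneg (by positivity) hφi
  have hQt : Q ≠ ⊤ := ENNReal.rpow_ne_top_of_nonneg (by positivity) hhi
  have key := H (fun y => P⁻¹ * φ y) (fun y => Q⁻¹ * h y) (by fun_prop) (by fun_prop)
    (fun x => ENNReal.mul_ne_top (by simpa using hP0) (hφt x))
    (fun x => ENNReal.mul_ne_top (by simpa using hQ0) (hht x)) n1 n2
  have e : ∀ x, Q⁻¹ * h x * ∫⁻ y, P⁻¹ * φ y * ‖x - y‖ₑ ^ (-l)
      = (P * Q)⁻¹ * (h x * ∫⁻ y, φ y * ‖x - y‖ₑ ^ (-l)) := by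
    intro x
    simp_rw [mul_assoc P⁻¹]
    rw [lintegral_const_mul _ (by fun_prop), ENNReal.mul_inv (Or.inl hP0) (Or.inl hPt)]
    ring
  simp_rw [e] at key
  rw [lintegral_const_mul', ← ENNReal.div_eq_inv_mul, ENNReal.div_le_iff (mul_ne_zero hP0 hQ0) (ENNReal.mul_ne_top hPt hQt)] at key
  · exact key
  · exact ENNReal.inv_ne_top.mpr (mul_ne_zero hP0 hQ0)

lemma ws_pointwise {N : ℕ} (Ω : Set (EuclideanSpace ℝ (Fin N))) (hΩo : IsOpen Ω)
    (ρ : EuclideanSpace ℝ (Fin N) → ENNReal) (hρm : Measurable ρ) (hρt : ∀ x, ρ x ≠ ⊤)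
    (t γ s : ℝ) (ht : 0 < t) (hs : s.HolderConjugate (2 * t)) (hN : 0 < N)
    (C₀ : ENNReal) (hC₀ : C₀ ≠ ⊤)
    (hweight : ∀ y : EuclideanSpace ℝ (Fin N), (∫⁻ x in Ω, ρ x ^ (-t) * ‖x - y‖ₑ ^ (-γ)) ≤ C₀)
    (D : EuclideanSpace ℝ (Fin N) → ENNReal) (hD : Measurable D) (x : EuclideanSpace ℝ (Fin N)) :
    (∫⁻ y in Ω, D y * ‖x - y‖ₑ ^ (1 - (N:ℝ))) ^ s ≤ C₀ ^ (s / (2 * t)) *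
      ∫⁻ y in Ω, (ρ y ^ (1 / 2 : ℝ) * D y) ^ s * ‖x - y‖ₑ ^ (-((N - 1 - γ / (2 * t)) * s)) := by
  have : Nonempty (Fin N) := ⟨⟨0, hN⟩⟩
  have hs0 : 0 < s := hs.pos
  have hne : ∀ᵐ y ∂(volume.restrict Ω), y ≠ x := ae_restrict_of_ae (Measure.ae_ne volume x)
  have hρ0 : ∀ᵐ y ∂(volume.restrict Ω), ρ y ≠ 0 := by
    have h1 := ae_lt_top (by fun_prop) (ne_top_of_le_ne_top hC₀ (hweight x))
    filter_upwards [h1, hne] with y hy hyx h0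
    have hk0 : ‖y - x‖ₑ ≠ 0 := by simpa [sub_eq_zero] using hyx
    have hk : ‖y - x‖ₑ ^ (-γ) ≠ 0 := by
      rw [Ne, ENNReal.rpow_eq_zero_iff]
      simp [hk0]
    rw [h0, ENNReal.zero_rpow_of_neg (by linarith), ENNReal.top_mul hk] at hy
    exact lt_irrefl _ hy
  have hk : (∫⁻ y in Ω, D y * ‖x - y‖ₑ ^ (1 - (N:ℝ))) ≤
      (∫⁻ y in Ω, ((ρ y ^ (1 / 2 : ℝ) * D y) * ‖x - y‖ₑ ^ (-(N - 1 - γ / (2 * t)))) ^ s) ^ (1 / s) *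
      (∫⁻ y in Ω, (ρ y ^ (-1 / 2 : ℝ) * ‖x - y‖ₑ ^ (-γ / (2 * t))) ^ (2 * t)) ^ (1 / (2 * t)) := by
    refine le_trans (le_of_eq ?_) (ENNReal.lintegral_mul_le_Lp_mul_Lq _ hs
      (by fun_prop) (by fun_prop))
    refine lintegral_congr_ae ?_
    filter_upwards [hρ0, hne] with y hy hyx
    have hk0 : ‖x - y‖ₑ ≠ 0 := by simpa [sub_eq_zero] using hyx.symm
    have e1 : ρ y ^ (1 / 2 : ℝ) * ρ y ^ (-1 / 2 : ℝ) = 1 := by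
      rw [← ENNReal.rpow_add _ _ hy (hρt y)]; norm_num
    have e2 : ‖x - y‖ₑ ^ (-(N - 1 - γ / (2 * t))) * ‖x - y‖ₑ ^ (-γ / (2 * t)) = ‖x - y‖ₑ ^ (1 - (N:ℝ)) := by
      rw [← ENNReal.rpow_add _ _ hk0 (by simp)]; congr 1; ring
    rw [Pi.mul_apply, ← e2, ← one_mul (D y * _), ← e1]
    ring
  refine (ENNReal.rpow_le_rpow hk hs0.le).trans ?_
  rw [ENNReal.mul_rpow_of_nonneg _ _ hs0.le, ← ENNReal.rpow_mul, ← ENNReal.rpow_mul,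
    one_div_mul_cancel hs0.ne', ENNReal.rpow_one, mul_comm, show 1 / (2 * t) * s = s / (2 * t) by ring]
  gcongr ?_ * ?_
  · refine ENNReal.rpow_le_rpow ?_ (by positivity)
    refine le_trans (le_of_eq ?_) (hweight x)
    refine lintegral_congr fun y => ?_
    rw [ENNReal.mul_rpow_of_nonneg _ _ (by positivity), ← ENNReal.rpow_mul, ← ENNReal.rpow_mul, enorm_sub_rev x y]
    congr 2
    · ring
    · field_simp
  · refine le_of_eq (lintegral_congr fun y => ?_)
    rw [ENNReal.mul_rpow_of_nonneg _ _ hs0.le, ← ENNReal.rpow_mul (‖x - y‖ₑ), neg_mul]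

lemma ws_ennreal {N : ℕ} (hN : 3 ≤ N)
    (Ω : Set (EuclideanSpace ℝ (Fin N))) (hΩo : IsOpen Ω)
    (ρ : EuclideanSpace ℝ (Fin N) → ENNReal) (hρm : Measurable ρ) (hρt : ∀ x, ρ x ≠ ⊤)
    (t γ : ℝ) (ht : 0 < t)
    (hγ₁ : (N : ℝ) - 2 * t < γ) (hγ₂ : γ < (N : ℝ) - 2)
    (C₀ : ENNReal) (hC₀ : C₀ ≠ ⊤)
    (hweight : ∀ y : EuclideanSpace ℝ (Fin N), (∫⁻ x in Ω, ρ x ^ (-t) * ‖x - y‖ₑ ^ (-γ)) ≤ C₀)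
    (q : ℝ) (hq0 : 2 < q) (hq : 1 / q = 1 / 2 - 1 / (N : ℝ) + (1 / t) * (1 / 2 - γ / (2 * N))) :
    ∃ C : ENNReal, C ≠ ⊤ ∧
      ∀ w : EuclideanSpace ℝ (Fin N) → ℝ, ContDiff ℝ 1 w → HasCompactSupport w →
        tsupport w ⊆ Ω → ∫⁻ x in Ω, ρ x * ‖fderiv ℝ w x‖ₑ ^ (2:ℝ) ≠ ⊤ → ∫⁻ x, ‖w x‖ₑ ^ q ≠ ⊤ →
        (∫⁻ x, ‖w x‖ₑ ^ q) ^ (1 / q)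
          ≤ C * (∫⁻ x in Ω, ρ x * ‖fderiv ℝ w x‖ₑ ^ (2:ℝ)) ^ (1 / 2 : ℝ) := by
  have hN0 : 0 < N := by omega
  have hNr : (0:ℝ) < N := by exact_mod_cast hN0
  have ht1 : 1 < t := by linarith
  have hsc : (2 * t).HolderConjugate (Real.conjExponent (2 * t)) :=
    Real.HolderConjugate.conjExponent (by linarith)
  set s := Real.conjExponent (2 * t) with hs
  have hs' : s = 2 * t / (2 * t - 1) := rfl
  have h2t : 0 < 2 * t - 1 := by linarith
  have hs0 : 0 < s := hsc.symm.pos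
  have hs1 : 1 < s := hsc.symm.lt
  have hs2 : s < 2 := by rw [hs', div_lt_iff₀ h2t]; linarith
  have hsinv : s * (1 - 1 / (2 * t)) = 1 := by rw [hs']; field_simp
  set l : ℝ := (N - 1 - γ / (2 * t)) * s with hl
  have hlN : l < N := by
    have : N - l = s * (1 - (N - γ) / (2 * t)) := by
      have : (N:ℝ) = N * (s * (1 - 1 / (2 * t))) := by rw [hsinv, mul_one]
      nth_rewrite 1 [this]
      rw [hl]; field_simp; ring
    have h1 : (N - γ) / (2 * t) < 1 := by rw [div_lt_one (by linarith)]; linarith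
    have : 0 < N - l := by rw [this]; exact mul_pos hs0 (by linarith)
    linarith
  have hq00 : 0 < q := by linarith
  have hqs : 0 < q - s := by linarith
  have hsum : 1 / (2 / s) + 1 / (q / (q - s)) + l / N = 2 := by
    have e1 : 1 / (q / (q - s)) = 1 - s * (1 / q) := by field_simp
    rw [e1, hq, hl]
    have : s * (1 - 1 / (2 * t)) = s - s / (2 * t) := by ring
    have e2 : s - s / (2 * t) = 1 := by rw [← this, hsinv]
    have : 1 / (2 / s) + (1 - s * (1 / 2 - 1 / (N:ℝ) + 1 / t * (1 / 2 - γ / (2 * N)))) + (N - 1 - γ / (2 * t)) * s / N = 1 + (s - s / (2 * t)) := by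
      field_simp; ring
    rw [this, e2]; norm_num
  obtain ⟨c, hc, H⟩ := ws_HLS hN0 (2 / s) (q / (q - s)) l (by rw [lt_div_iff₀ hs0]; linarith)
    (by rw [lt_div_iff₀ hqs]; linarith) hlN hsum
  obtain ⟨K, hK, HK⟩ := ws_potential hN0
  set M : ENNReal := K ^ s * C₀ ^ (s / (2 * t)) * c with hM
  have hMt : M ≠ ⊤ := ENNReal.mul_ne_top (ENNReal.mul_ne_top (ENNReal.rpow_ne_top_of_nonneg hs0.le hK)
    (ENNReal.rpow_ne_top_of_nonneg (by positivity) hC₀)) hc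
  refine ⟨M ^ (1 / s), ENNReal.rpow_ne_top_of_nonneg (by positivity) hMt, fun w hw hwc hwΩ hF hW => ?_⟩
  have hDc : Continuous (fderiv ℝ w) := hw.continuous_fderiv one_ne_zero
  have hDm : Measurable (fderiv ℝ w) := hDc.measurable
  have hwm : Measurable w := hw.continuous.measurable
  set F := ∫⁻ x in Ω, ρ x * ‖fderiv ℝ w x‖ₑ ^ (2:ℝ) with hFdef
  set W := ∫⁻ x, ‖w x‖ₑ ^ q with hWdef
  by_cases hW0 : W = 0
  · rw [hW0, ENNReal.zero_rpow_of_pos (by positivity)]; exact zero_le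
  set φ : EuclideanSpace ℝ (Fin N) → ENNReal :=
    Ω.indicator (fun y => (ρ y ^ (1 / 2 : ℝ) * ‖fderiv ℝ w y‖ₑ) ^ s) with hφ
  set h : EuclideanSpace ℝ (Fin N) → ENNReal := fun x => ‖w x‖ₑ ^ (q - s) with hh
  have hφm : Measurable φ := by
    refine Measurable.indicator ?_ hΩo.measurableSet
    fun_prop
  have hhm : Measurable h := by fun_prop
  have hφt : ∀ x, φ x ≠ ⊤ := by
    intro x
    by_cases hx : x ∈ Ω
    · rw [hφ, Set.indicator_of_mem hx]
      exact ENNReal.rpow_ne_top_of_nonneg hs0.le (ENNReal.mul_ne_top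
        (ENNReal.rpow_ne_top_of_nonneg (by norm_num) (hρt x)) (by simp))
    · rw [hφ, Set.indicator_of_notMem hx]; simp
  have hht : ∀ x, h x ≠ ⊤ := fun x => ENNReal.rpow_ne_top_of_nonneg hqs.le (by simp)
  have hφF : ∫⁻ y, φ y ^ (2 / s) = F := by
    rw [hFdef, ← lintegral_indicator hΩo.measurableSet]
    refine lintegral_congr fun y => ?_
    by_cases hy : y ∈ Ω
    · rw [hφ, Set.indicator_of_mem hy, Set.indicator_of_mem hy, ← ENNReal.rpow_mul,
        mul_div_cancel₀ _ hs0.ne', ENNReal.mul_rpow_of_nonneg _ _ (by norm_num), ← ENNReal.rpow_mul]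
      norm_num
    · rw [hφ, Set.indicator_of_notMem hy, Set.indicator_of_notMem hy, ENNReal.zero_rpow_of_pos (by positivity)]
  have hhW : ∫⁻ y, h y ^ (q / (q - s)) = W := by
    refine lintegral_congr fun y => ?_
    rw [hh]
    simp only
    rw [← ENNReal.rpow_mul, mul_div_cancel₀ _ hqs.ne']
  have key := H φ h hφm hhm hφt hht (by rwa [hφF]) (by rwa [hhW])
  rw [hφF, hhW] at key
  have hpt : ∀ x, ‖w x‖ₑ ^ s ≤ K ^ s * C₀ ^ (s / (2 * t)) * ∫⁻ y, φ y * ‖x - y‖ₑ ^ (-l) := by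
    intro x
    have h1 := HK w hw hwc x
    have h2 : ∫⁻ y, ‖fderiv ℝ w y‖ₑ * ‖x - y‖ₑ ^ (1 - (N:ℝ)) =
        ∫⁻ y in Ω, ‖fderiv ℝ w y‖ₑ * ‖x - y‖ₑ ^ (1 - (N:ℝ)) := by
      symm
      apply setLIntegral_eq_of_support_subset
      intro y hy
      apply hwΩ
      apply support_fderiv_subset ℝ
      intro h0
      apply hy
      simp only [h0, ← ofReal_norm (0 : EuclideanSpace ℝ (Fin N) →L[ℝ] ℝ), norm_zero, ENNReal.ofReal_zero, zero_mul]
    have h3 := ws_pointwise Ω hΩo ρ hρm hρt t γ s ht hsc.symm hN0 C₀ hC₀ hweight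
      (fun y => ‖fderiv ℝ w y‖ₑ) (by fun_prop) x
    have h4 : ∫⁻ y, φ y * ‖x - y‖ₑ ^ (-l) =
        ∫⁻ y in Ω, (ρ y ^ (1 / 2 : ℝ) * ‖fderiv ℝ w y‖ₑ) ^ s * ‖x - y‖ₑ ^ (-l) := by
      rw [← lintegral_indicator hΩo.measurableSet]
      refine lintegral_congr fun y => ?_
      rw [hφ]
      by_cases hy : y ∈ Ω
      · simp only [Set.indicator_of_mem hy]
      · simp only [Set.indicator_of_notMem hy, zero_mul]
    rw [h4, mul_assoc]
    refine (ENNReal.rpow_le_rpow h1 hs0.le).trans ?_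
    rw [ENNReal.mul_rpow_of_nonneg _ _ hs0.le, h2]
    gcongr
  have hmain : W ≤ M * (F ^ (s / 2) * W ^ (1 - s / q)) := by
    calc W = ∫⁻ x, h x * ‖w x‖ₑ ^ s := by
          refine lintegral_congr fun x => ?_
          rw [hh]
          simp only
          rw [← ENNReal.rpow_add_of_nonneg _ _ hqs.le hs0.le, sub_add_cancel]
      _ ≤ ∫⁻ x, (K ^ s * C₀ ^ (s / (2 * t))) * (h x * ∫⁻ y, φ y * ‖x - y‖ₑ ^ (-l)) := by
          refine lintegral_mono fun x => ?_
          rw [mul_left_comm]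
          gcongr
          exact hpt x
      _ = (K ^ s * C₀ ^ (s / (2 * t))) * ∫⁻ x, (h x * ∫⁻ y, φ y * ‖x - y‖ₑ ^ (-l)) := by
          rw [lintegral_const_mul']
          exact ENNReal.mul_ne_top (ENNReal.rpow_ne_top_of_nonneg hs0.le hK)
            (ENNReal.rpow_ne_top_of_nonneg (by positivity) hC₀)
      _ ≤ (K ^ s * C₀ ^ (s / (2 * t))) * (c * (F ^ (1 / (2 / s)) * W ^ (1 / (q / (q - s))))) := by
          gcongr
      _ = _ := by
          rw [hM, show 1 / (2 / s) = s / 2 by field_simp, show 1 / (q / (q - s)) = 1 - s / q by field_simp]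
          ring
  have hWs : W ^ (s / q) ≤ M * F ^ (s / 2) := by
    have e : W = W ^ (s / q) * W ^ (1 - s / q) := by
      rw [← ENNReal.rpow_add _ _ hW0 hW]; simp
    have hx0 : W ^ (1 - s / q) ≠ 0 := by
      rw [Ne, ENNReal.rpow_eq_zero_iff]; simp [hW0, hW]
    have hxt : W ^ (1 - s / q) ≠ ⊤ := by
      rw [Ne, ENNReal.rpow_eq_top_iff]; simp [hW0, hW]
    rw [← mul_assoc] at hmain
    nth_rewrite 1 [e] at hmain
    exact (ENNReal.mul_le_mul_iff_left hx0 hxt).mp hmain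
  have := ENNReal.rpow_le_rpow hWs (show 0 ≤ 1 / s by positivity)
  rw [ENNReal.mul_rpow_of_nonneg _ _ (by positivity), ← ENNReal.rpow_mul, ← ENNReal.rpow_mul] at this
  convert this using 2
  · congr 1
    field_simp
  · congr 1
    field_simp

/-- Weighted Sobolev inequality with degenerate weight `ρ = |Du|^{p(x)-2}`. -/
theorem weighted_sobolev_inequality {N : ℕ} (hN : 3 ≤ N)
    (Ω : Set (EuclideanSpace ℝ (Fin N))) (hΩo : IsOpen Ω)
    (hΩbdd : Bornology.IsBounded Ω)
    (p : EuclideanSpace ℝ (Fin N) → ℝ) (hpc : Continuous p)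
    (hp2 : ∀ x ∈ Ω, 2 ≤ p x) (pp : ℝ) (hpp : ∀ x ∈ Ω, p x ≤ pp)
    -- u ∈ C^{1,α}(cl Ω)
    (u : EuclideanSpace ℝ (Fin N) → ℝ) (hu : ContDiff ℝ 1 u)
    (α Cα : ℝ) (hα : 0 < α) (hα1 : α ≤ 1)
    (hHolder : ∀ x ∈ closure Ω, ∀ y ∈ closure Ω,
      ‖fderiv ℝ u x - fderiv ℝ u y‖ ≤ Cα * ‖x - y‖ ^ α)
    -- the weight and the exponents
    (tbar γ : ℝ) (htbar : 0 < tbar)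
    (hγ₁ : (N : ℝ) - 2 * tbar < γ) (hγ₂ : γ < (N : ℝ) - 2)
    (C₀ : ℝ) (hC₀ : 0 < C₀)
    (hweight : ∀ y : EuclideanSpace ℝ (Fin N),
      (∫⁻ x in Ω, (ENNReal.ofReal (‖fderiv ℝ u x‖ ^ (p x - 2))) ^ (-tbar)
          * (ENNReal.ofReal ‖x - y‖) ^ (-γ)) ≤ ENNReal.ofReal C₀)
    (q : ℝ) (hq : 1 / q = 1 / 2 - 1 / (N : ℝ) + (1 / tbar) * (1 / 2 - γ / (2 * N))) :
    ∃ C : ℝ, 0 < C ∧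
      ∀ w : EuclideanSpace ℝ (Fin N) → ℝ, ContDiff ℝ 1 w → HasCompactSupport w →
        tsupport w ⊆ Ω →
        (∫ x in Ω, |w x| ^ q) ^ (1 / q)
          ≤ C * (∫ x in Ω, ‖fderiv ℝ u x‖ ^ (p x - 2) * ‖fderiv ℝ w x‖ ^ 2) ^ (1 / 2 : ℝ) := by
  have hNr : (0:ℝ) < N := by
    have : 0 < N := by omega
    exact_mod_cast this
  have hq2 : 2 < q := by
    have e : 1 / q = 1 / 2 - 1 / (N : ℝ) + (N - γ) / (2 * tbar) / N := by
      rw [hq]; field_simp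
    have h1 : (N - γ) / (2 * tbar) < 1 := by rw [div_lt_one (by linarith)]; linarith
    have h2 : (N - γ) / (2 * tbar) / N < 1 / N := by gcongr
    have h3 : 1 / q < 1 / 2 := by linarith
    have h4 : 0 < (N - γ) / (2 * tbar) / N :=
      div_pos (div_pos (by linarith) (by linarith)) hNr
    have h5 : 1 / (N:ℝ) ≤ 1 / 2 := by
      have : (3:ℝ) ≤ N := by exact_mod_cast hN
      apply one_div_le_one_div_of_le <;> linarith
    have h6 : 0 < 1 / q := by linarith
    have h7 : 0 < q := one_div_pos.mp h6
    exact (one_div_lt_one_div h7 (by norm_num)).mp h3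
  have hq0 : 0 < q := by linarith
  have hDu : Continuous (fderiv ℝ u) := hu.continuous_fderiv one_ne_zero
  have hDum : Measurable (fderiv ℝ u) := hDu.measurable
  have hpm : Measurable p := hpc.measurable
  set ρ : EuclideanSpace ℝ (Fin N) → ℝ := fun x => ‖fderiv ℝ u x‖ ^ (p x - 2) with hρ
  have hρ0 : ∀ x, 0 ≤ ρ x := fun x => Real.rpow_nonneg (norm_nonneg _) _
  have hρm : Measurable ρ := by fun_prop
  obtain ⟨C, hC, H⟩ := ws_ennreal hN Ω hΩo (fun x => ENNReal.ofReal (ρ x)) (by fun_prop) (by simp)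
    tbar γ htbar hγ₁ hγ₂ (ENNReal.ofReal C₀) (by simp)
    (fun y => by simpa only [ofReal_norm] using hweight y) q hq2 hq
  obtain ⟨B, hB⟩ : ∃ B : ℝ, ∀ x ∈ Ω, ρ x ≤ B := by
    obtain ⟨D, hD⟩ := (hΩbdd.isCompact_closure).exists_bound_of_continuousOn hDu.continuousOn
    refine ⟨(max D 1) ^ (pp - 2), fun x hx => ?_⟩
    have h1 : ‖fderiv ℝ u x‖ ≤ max D 1 := (hD x (subset_closure hx)).trans (le_max_left _ _)
    calc ρ x ≤ (max D 1) ^ (p x - 2) :=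
          Real.rpow_le_rpow (norm_nonneg _) h1 (by linarith [hp2 x hx])
      _ ≤ _ := Real.rpow_le_rpow_of_exponent_le (le_max_right _ _) (by linarith [hpp x hx])
  refine ⟨C.toReal + 1, by positivity, fun w hw hwc hwΩ => ?_⟩
  have hDc : Continuous (fderiv ℝ w) := hw.continuous_fderiv one_ne_zero
  have hDm : Measurable (fderiv ℝ w) := hDc.measurable
  have hwm : Measurable w := hw.continuous.measurable
  have hWint : Integrable (fun x => |w x| ^ q) := by
    apply Continuous.integrable_of_hasCompactSupport
    · exact hw.continuous.abs.rpow_const (fun _ => Or.inr hq0.le)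
    · exact hwc.comp_left (g := fun y => |y| ^ q) (by simp [hq0.ne'])
  have hDint : Integrable (fun x => ‖fderiv ℝ w x‖ ^ 2) := by
    apply Continuous.integrable_of_hasCompactSupport
    · fun_prop
    · exact (hwc.fderiv ℝ).comp_left (g := fun y => ‖y‖ ^ 2) (by simp)
  have hFint : IntegrableOn (fun x => ρ x * ‖fderiv ℝ w x‖ ^ 2) Ω := by
    refine Integrable.bdd_mul (c := B) hDint.integrableOn hρm.aestronglyMeasurable ?_
    filter_upwards [ae_restrict_mem hΩo.measurableSet] with x hx
    rw [Real.norm_of_nonneg (hρ0 x)]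
    exact hB x hx
  have eW : ∀ x, ‖w x‖ₑ ^ q = ENNReal.ofReal (|w x| ^ q) := fun x => by
    rw [← ENNReal.ofReal_rpow_of_nonneg (abs_nonneg _) hq0.le, ← Real.norm_eq_abs, ofReal_norm]
  have eF : ∀ x, ENNReal.ofReal (ρ x) * ‖fderiv ℝ w x‖ₑ ^ (2:ℝ)
      = ENNReal.ofReal (ρ x * ‖fderiv ℝ w x‖ ^ 2) := fun x => by
    have e : ENNReal.ofReal (‖fderiv ℝ w x‖ ^ 2) = ‖fderiv ℝ w x‖ₑ ^ (2:ℝ) := by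
      rw [← Real.rpow_natCast, Nat.cast_ofNat,
        ← ENNReal.ofReal_rpow_of_nonneg (norm_nonneg _) (by norm_num), ofReal_norm]
    rw [ENNReal.ofReal_mul (hρ0 x), e]
  have hF0 : 0 ≤ ∫ x in Ω, ρ x * ‖fderiv ℝ w x‖ ^ 2 :=
    integral_nonneg fun x => mul_nonneg (hρ0 x) (by positivity)
  have hW0 : 0 ≤ ∫ x, |w x| ^ q := integral_nonneg fun x => by positivity
  have key := H w hw hwc hwΩ
  simp_rw [eW, eF] at key
  rw [← ofReal_integral_eq_lintegral_ofReal hWint (Filter.Eventually.of_forall fun x => by positivity),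
    ← ofReal_integral_eq_lintegral_ofReal hFint
      (Filter.Eventually.of_forall fun x => mul_nonneg (hρ0 x) (by positivity))] at key
  replace key := key (by simp) (by simp)
  rw [ENNReal.ofReal_rpow_of_nonneg hW0 (by positivity), ENNReal.ofReal_rpow_of_nonneg hF0 (by positivity),
    ← ENNReal.ofReal_toReal hC, ← ENNReal.ofReal_mul (by positivity),
    ENNReal.ofReal_le_ofReal_iff (by positivity)] at key
  have hle : ∫ x in Ω, |w x| ^ q ≤ ∫ x, |w x| ^ q :=
    setIntegral_le_integral hWint (Filter.Eventually.of_forall fun x => by positivity)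
  calc (∫ x in Ω, |w x| ^ q) ^ (1 / q) ≤ (∫ x, |w x| ^ q) ^ (1 / q) :=
        Real.rpow_le_rpow (integral_nonneg fun x => by positivity) hle (by positivity)
    _ ≤ _ := key
    _ ≤ _ := by
        gcongr
        linarith
end

section
/- Let (H, ⟨·,·⟩) be a real Hilbert space compactly embedded in L²(Ω) for a bounded domain Ω, let ‖·‖_A be a norm on H equivalent to the Hilbert norm, and let V ∈ L^∞(Ω). Then the infimum μ₁ = inf{ ‖φ‖_A² − ∫_Ω V φ² : φ ∈ H, ∫_Ω φ² = 1 } is finite and attained by some φ₁ ∈ H with ∫_Ω φ₁² = 1. -/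
open MeasureTheory

open Filter Topology in
lemma nested_convex_inter {H : Type*} [NormedAddCommGroup H] [InnerProductSpace ℝ H]
    [CompleteSpace H] (C : ℕ → Set H) (hanti : Antitone C) (hcl : ∀ n, IsClosed (C n))
    (hcv : ∀ n, Convex ℝ (C n)) (R : ℝ) (hR : ∀ n, ∃ x ∈ C n, ‖x‖ ≤ R) :
    ∃ p, ∀ n, p ∈ C n := by
  have hmin : ∀ n, ∃ p ∈ C n, ∀ x ∈ C n, ‖p‖ ≤ ‖x‖ := by
    intro n
    obtain ⟨x0, hx0, -⟩ := hR n
    obtain ⟨v, hv, hv2⟩ := exists_norm_eq_iInf_of_complete_convex ⟨x0, hx0⟩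
      (hcl n).isComplete (hcv n) 0
    refine ⟨v, hv, fun x hx => ?_⟩
    simp only [zero_sub, norm_neg] at hv2
    rw [hv2]
    exact ciInf_le (f := fun w : C n => ‖(w : H)‖)
      ⟨0, by rintro _ ⟨w, rfl⟩; exact norm_nonneg _⟩ ⟨x, hx⟩
  choose p hp hpm using hmin
  have hmono : Monotone (fun n => ‖p n‖ ^ 2) := fun n m hnm => by
    have := hpm n (p m) (hanti hnm (hp m))
    dsimp only
    gcongr
  have hbdd : BddAbove (Set.range (fun n => ‖p n‖ ^ 2)) := by
    refine ⟨R ^ 2, ?_⟩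
    rintro _ ⟨n, rfl⟩
    obtain ⟨x, hx, hxR⟩ := hR n
    have := (hpm n x hx).trans hxR
    dsimp only
    gcongr
  have hlim := tendsto_atTop_ciSup hmono hbdd
  have hle : ∀ n, ‖p n‖ ^ 2 ≤ ⨆ i, ‖p i‖ ^ 2 := fun n => le_ciSup hbdd n
  set d := ⨆ i, ‖p i‖ ^ 2
  have hcau : CauchySeq p := by
    refine cauchySeq_of_le_tendsto_0' (fun n => √(2 * (d - ‖p n‖ ^ 2))) ?_ ?_
    · intro n m hnm
      rw [dist_eq_norm]
      apply Real.le_sqrt_of_sq_le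
      have hmid : (1 / 2 : ℝ) • p n + (1 / 2 : ℝ) • p m ∈ C n :=
        hcv n (hp n) (hanti hnm (hp m)) (by norm_num) (by norm_num) (by norm_num)
      have h1 := hpm n _ hmid
      rw [← smul_add, norm_smul] at h1
      norm_num at h1
      have h2 := parallelogram_law_with_norm ℝ (p n) (p m)
      have h3 := hle m
      have h4 : (2 * ‖p n‖) ^ 2 ≤ ‖p n + p m‖ ^ 2 := by
        have : 2 * ‖p n‖ ≤ ‖p n + p m‖ := by linarith
        gcongr
      nlinarith
    · have : Tendsto (fun n => √(2 * (d - ‖p n‖ ^ 2))) atTop (𝓝 (√(2 * (d - d)))) :=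
        ((hlim.const_sub d).const_mul 2).sqrt
      simpa using this
  obtain ⟨q, hq⟩ := cauchySeq_tendsto_of_complete hcau
  refine ⟨q, fun n => (hcl n).mem_of_tendsto hq ?_⟩
  filter_upwards [eventually_ge_atTop n] with m hm
  exact hanti hm (hp m)

lemma sq_int_eq {α : Type*} [MeasurableSpace α] {μ : Measure α} (f : Lp ℝ 2 μ) :
    ∫ x, (f : α → ℝ) x ^ 2 ∂μ = ‖f‖ ^ 2 := by
  rw [← real_inner_self_eq_norm_sq, L2.inner_def]
  refine integral_congr_ae (ae_of_all _ fun x => ?_)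
  simp

lemma quad_continuous {α : Type*} [MeasurableSpace α] {μ : Measure α} (V : α → ℝ)
    (hVm : Measurable V) (CV : ℝ) (hV : ∀ x, |V x| ≤ CV) :
    Continuous (fun f : Lp ℝ 2 μ => ∫ x, V x * (f : α → ℝ) x ^ 2 ∂μ) := by
  have hm : MemLp V ⊤ μ := memLp_top_of_bound hVm.aestronglyMeasurable CV (ae_of_all _ hV)
  let T : Lp ℝ 2 μ →L[ℝ] Lp ℝ 2 μ :=
    (ContinuousLinearMap.mul ℝ ℝ).holderL μ ⊤ 2 2 hm.toLp
  have h : (fun f : Lp ℝ 2 μ => ∫ x, V x * (f : α → ℝ) x ^ 2 ∂μ) =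
      fun f => inner ℝ (T f) f := by
    funext f
    rw [L2.inner_def]
    refine integral_congr_ae ?_
    have h1 : (T f : α → ℝ) =ᵐ[μ] _ := (ContinuousLinearMap.mul ℝ ℝ).coeFn_holder (r := 2) hm.toLp f
    filter_upwards [h1, hm.coeFn_toLp] with x hx hx2
    simp [hx, hx2]
    ring
  rw [h]
  fun_prop

lemma quad_le {α : Type*} [MeasurableSpace α] {μ : Measure α} (V : α → ℝ)
    (hVm : Measurable V) (CV : ℝ) (hV : ∀ x, |V x| ≤ CV) (f : Lp ℝ 2 μ) :
    ∫ x, V x * (f : α → ℝ) x ^ 2 ∂μ ≤ CV * ∫ x, (f : α → ℝ) x ^ 2 ∂μ := by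
  have hi : Integrable (fun x => (f : α → ℝ) x ^ 2) μ := (Lp.memLp f).integrable_sq
  rw [← integral_const_mul]
  refine integral_mono (hi.bdd_mul hVm.aestronglyMeasurable (ae_of_all _ hV)) (hi.const_mul _) ?_
  intro x
  have := le_of_abs_le (hV x)
  dsimp only
  gcongr

lemma abstract_attained {H E : Type*} [NormedAddCommGroup H] [InnerProductSpace ℝ H]
    [CompleteSpace H] [NormedAddCommGroup E] [NormedSpace ℝ E]
    (ι : H →L[ℝ] E) (hι : IsCompactOperator ι) (A : H → ℝ)
    (hA_add : ∀ x y : H, A (x + y) ≤ A x + A y)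
    (hA_smul : ∀ (c : ℝ) (x : H), A (c • x) = |c| * A x)
    (c₁ c₂ : ℝ) (hc₁ : 0 < c₁) (hc₂ : 0 < c₂)
    (hA_equiv : ∀ x : H, c₁ * ‖x‖ ≤ A x ∧ A x ≤ c₂ * ‖x‖)
    (Q : E → ℝ) (hQc : Continuous Q) (CV : ℝ) (hQle : ∀ f, Q f ≤ CV * ‖f‖ ^ 2)
    (hne : ∃ φ : H, ‖ι φ‖ ^ 2 = 1) :
    ∃ φ₁ : H, ‖ι φ₁‖ ^ 2 = 1 ∧ ∀ φ : H, ‖ι φ‖ ^ 2 = 1 →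
      A φ₁ ^ 2 - Q (ι φ₁) ≤ A φ ^ 2 - Q (ι φ) := by
  have hA0 : ∀ x, 0 ≤ A x := fun x => (by positivity : 0 ≤ c₁ * ‖x‖).trans (hA_equiv x).1
  have hAcont : Continuous A := by
    have hlip : LipschitzWith (Real.toNNReal c₂) A := by
      refine LipschitzWith.of_le_add_mul _ fun x y => ?_
      have h1 := hA_add y (x - y)
      have h2 := (hA_equiv (x - y)).2
      rw [add_sub_cancel] at h1
      rw [Real.coe_toNNReal _ hc₂.le, dist_eq_norm]
      linarith
    exact hlip.continuous
  let S : Set ℝ := (fun φ => A φ ^ 2 - Q (ι φ)) '' {φ : H | ‖ι φ‖ ^ 2 = 1}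
  have hSne : S.Nonempty := by
    obtain ⟨φ, hφ⟩ := hne
    exact ⟨_, φ, hφ, rfl⟩
  have hSb : BddBelow S := by
    refine ⟨-CV, ?_⟩
    rintro _ ⟨φ, hφ, rfl⟩
    have h1 := hQle (ι φ)
    rw [show ‖ι φ‖ ^ 2 = 1 from hφ] at h1
    have := sq_nonneg (A φ)
    dsimp only
    linarith
  obtain ⟨s, hsa, hslim, hsS⟩ := exists_seq_tendsto_sInf hSne hSb
  choose u hu hus using hsS
  have hAR : ∀ n, A (u n) ≤ √(s 0 + CV) := by
    intro n
    apply Real.le_sqrt_of_sq_le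
    have h1 := hQle (ι (u n))
    rw [show ‖ι (u n)‖ ^ 2 = 1 from hu n] at h1
    have h2 := hsa (Nat.zero_le n)
    have h3 := hus n
    dsimp only at h3
    linarith
  set R := √(s 0 + CV)
  have huR : ∀ n, ‖u n‖ ≤ R / c₁ := by
    intro n
    rw [le_div_iff₀ hc₁]
    linarith [(hA_equiv (u n)).1, hAR n]
  obtain ⟨K, hK, hKs⟩ := IsCompactOperator.image_closedBall_subset_compact
    (𝕜₁ := ℝ) (f := (ι : H →ₗ[ℝ] E)) hι (R / c₁)
  obtain ⟨⟨a, g⟩, -, k, hk, hlim⟩ := ((isCompact_Icc (a := (0:ℝ)) (b := R)).prod hK).tendsto_subseq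
    (x := fun n => (A (u n), ι (u n)))
    (fun n => ⟨⟨hA0 _, hAR n⟩, hKs ⟨u n, by simpa using huR n, rfl⟩⟩)
  have hlA : Filter.Tendsto (fun n => A (u (k n))) Filter.atTop (nhds a) := (continuous_fst.tendsto _).comp hlim
  have hlg : Filter.Tendsto (fun n => ι (u (k n))) Filter.atTop (nhds g) := (continuous_snd.tendsto _).comp hlim
  have ha0 : 0 ≤ a := ge_of_tendsto' hlA fun n => hA0 _
  -- nested convex sets
  let ε : ℕ → ℝ := fun n => 1 / ((n : ℝ) + 1)
  have hε : ∀ n, 0 < ε n := fun n => Nat.one_div_pos_of_nat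
  have hεlim : Filter.Tendsto ε Filter.atTop (nhds 0) := tendsto_one_div_add_atTop_nhds_zero_nat
  have hεanti : Antitone ε := fun n m h => Nat.one_div_le_one_div h
  have hAconv : ConvexOn ℝ Set.univ A := by
    refine ⟨convex_univ, fun x _ y _ b c hb hc _ => ?_⟩
    have := hA_add (b • x) (c • y)
    rw [hA_smul, hA_smul, abs_of_nonneg hb, abs_of_nonneg hc] at this
    simpa using this
  obtain ⟨p, hp⟩ := nested_convex_inter
    (fun n => (ι ⁻¹' Metric.closedBall g (ε n)) ∩ {x | A x ≤ a + ε n})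
    (fun n m h x hx => ⟨Metric.closedBall_subset_closedBall (hεanti h) hx.1,
      le_trans (show A x ≤ a + ε m from hx.2) (by have := hεanti h; linarith)⟩)
    (fun n => (Metric.isClosed_closedBall.preimage ι.continuous).inter
      (isClosed_le hAcont continuous_const))
    (fun n => ((convex_closedBall g (ε n)).linear_preimage (ι : H →ₗ[ℝ] _)).inter
      (by simpa using hAconv.convex_le (a + ε n)))
    (R / c₁)
    (fun n => by
      have e1 := hlg.eventually (Metric.closedBall_mem_nhds g (hε n))
      have e2 := hlA.eventually (Iic_mem_nhds (show a < a + ε n by linarith [hε n]))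
      obtain ⟨j, h1, h2⟩ := (e1.and e2).exists
      exact ⟨u (k j), ⟨h1, h2⟩, huR _⟩)
  have hAp : A p ≤ a := by
    have : Filter.Tendsto (fun n => a + ε n) Filter.atTop (nhds (a + 0)) := hεlim.const_add a
    rw [add_zero] at this
    exact ge_of_tendsto' this fun n => (hp n).2
  have hιp : ι p = g := by
    have : dist (ι p) g ≤ 0 := ge_of_tendsto' hεlim fun n => (hp n).1
    exact dist_le_zero.mp this
  have hg1 : ‖g‖ ^ 2 = 1 := by
    have h1 : Filter.Tendsto (fun n => ‖ι (u (k n))‖ ^ 2) Filter.atTop (nhds (‖g‖ ^ 2)) := (hlg.norm).pow 2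
    have h2 : (fun n => ‖ι (u (k n))‖ ^ 2) = fun _ => (1 : ℝ) := funext fun n => hu (k n)
    rw [h2] at h1
    exact tendsto_nhds_unique h1 tendsto_const_nhds
  have hJ : a ^ 2 - Q g = sInf S := by
    have h1 : Filter.Tendsto (fun n => A (u (k n)) ^ 2 - Q (ι (u (k n)))) Filter.atTop (nhds (a ^ 2 - Q g)) :=
      (hlA.pow 2).sub ((hQc.tendsto g).comp hlg)
    have h2 := hslim.comp hk.tendsto_atTop
    refine tendsto_nhds_unique h1 (h2.congr fun n => (hus (k n)).symm)
  refine ⟨p, by rw [hιp, hg1], fun φ hφ => ?_⟩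
  have h1 : sInf S ≤ A φ ^ 2 - Q (ι φ) := csInf_le hSb ⟨φ, hφ, rfl⟩
  have h2 : A p ^ 2 ≤ a ^ 2 := pow_le_pow_left₀ (hA0 p) hAp 2
  rw [hιp]
  linarith

/-- Existence of a first eigenfunction: in a Hilbert space `H` compactly embedded
in `L²(Ω)`, with an equivalent norm `A` and a bounded potential `V`, the infimum
`μ₁ = inf { A(φ)² − ∫_Ω V φ² : ∫_Ω φ² = 1 }` is attained. -/
theorem first_eigenvalue_attained {N : ℕ}
    (Ω : Set (EuclideanSpace ℝ (Fin N))) (hΩ : MeasurableSet Ω)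
    (hΩfin : volume Ω < ⊤)
    {H : Type*} [NormedAddCommGroup H] [InnerProductSpace ℝ H] [CompleteSpace H]
    -- the embedding of H into L²(Ω), assumed compact
    (ι : H →L[ℝ] (Lp ℝ 2 (volume.restrict Ω)))
    (hι : IsCompactOperator ι)
    -- an equivalent norm ‖·‖_A on H
    (A : H → ℝ)
    (hA_add : ∀ x y : H, A (x + y) ≤ A x + A y)
    (hA_smul : ∀ (c : ℝ) (x : H), A (c • x) = |c| * A x)
    (c₁ c₂ : ℝ) (hc₁ : 0 < c₁) (hc₂ : 0 < c₂)
    (hA_equiv : ∀ x : H, c₁ * ‖x‖ ≤ A x ∧ A x ≤ c₂ * ‖x‖)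
    -- a bounded measurable potential V
    (V : EuclideanSpace ℝ (Fin N) → ℝ) (hVmeas : Measurable V)
    (CV : ℝ) (hV : ∀ x, |V x| ≤ CV)
    -- the constraint set is nonempty
    (hne : ∃ φ : H, ∫ x in Ω, (ι φ : EuclideanSpace ℝ (Fin N) → ℝ) x ^ 2 = 1) :
    ∃ φ₁ : H, (∫ x in Ω, (ι φ₁ : EuclideanSpace ℝ (Fin N) → ℝ) x ^ 2 = 1) ∧
      ∀ φ : H, (∫ x in Ω, (ι φ : EuclideanSpace ℝ (Fin N) → ℝ) x ^ 2 = 1) →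
        A φ₁ ^ 2 - ∫ x in Ω, V x * (ι φ₁ : EuclideanSpace ℝ (Fin N) → ℝ) x ^ 2
          ≤ A φ ^ 2 - ∫ x in Ω, V x * (ι φ : EuclideanSpace ℝ (Fin N) → ℝ) x ^ 2 := by
  have hQc := quad_continuous (μ := volume.restrict Ω) V hVmeas CV hV
  have hQle := quad_le (μ := volume.restrict Ω) V hVmeas CV hV
  simp only [sq_int_eq] at hne hQle ⊢
  exact abstract_attained ι hι A hA_add hA_smul c₁ c₂ hc₁ hc₂ hA_equiv _ hQc CV hQle hne
end
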